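/- For every prime p, every real β > 0, and every integer N ≥ 0, Z_N(ℙ¹(ℚ_p), β)/N! = Σ_{(N_0,…,N_p)} ∏_{k=0}^{p} (p/(p+1))^{N_k} · Z_{N_k}(pℤ_p, β)/N_k!, where the sum runs over all (p+1)-tuples of nonnegative integers (N_0,…,N_p) with N_0 + ⋯ + N_p = N. -/

import Mathlib

open MeasureTheory
open scoped LinearAlgebra.Projectivization

namespace LogCoulomb

noncomputable section

/-! ### The projective line over `ℚ_p`, its spherical metric and `PGL₂`-invariant measure -/

variable (p : ℕ) [Fact p.Prime]

instance : MeasurableSpace ℚ_[p] := borel _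
instance : BorelSpace ℚ_[p] := ⟨rfl⟩

/-- The projective line over `ℚ_p`. -/
abbrev P1 := ℙ ℚ_[p] (Fin 2 → ℚ_[p])

instance : TopologicalSpace (P1 p) :=
  inferInstanceAs (TopologicalSpace (Quotient _))

instance : MeasurableSpace (P1 p) := borel _
instance : BorelSpace (P1 p) := ⟨rfl⟩

/-- Spherical distance on homogeneous coordinates:
`δ((x₀,x₁),(y₀,y₁)) = |x₀y₁ - x₁y₀| / (max(|x₀|,|x₁|) ⬝ max(|y₀|,|y₁|))`. -/
def sdelta (x y : Fin 2 → ℚ_[p]) : ℝ :=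
  ‖x 0 * y 1 - x 1 * y 0‖ / (max ‖x 0‖ ‖x 1‖ * max ‖y 0‖ ‖y 1‖)

/-- The spherical metric on `ℙ¹(ℚ_p)`, defined via the canonical representatives. -/
def pdelta (ξ η : P1 p) : ℝ := sdelta p ξ.rep η.rep

open Classical in
/-- The action of a matrix on `ℙ¹(ℚ_p)`: `[x₀:x₁] ↦ [a x₀ + b x₁ : c x₀ + d x₁]`
(well-defined, and given by the first branch of the `if`, whenever `A` is invertible). -/
def mobius (A : Matrix (Fin 2) (Fin 2) ℚ_[p]) (ξ : P1 p) : P1 p :=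
  if h : A.mulVec ξ.rep ≠ 0 then Projectivization.mk ℚ_[p] (A.mulVec ξ.rep) h else ξ

/-- `ν` is invariant under the action of `GL₂(ℤ_p)` on `ℙ¹(ℚ_p)`; membership of the matrix
entries in `ℤ_p`, and invertibility of the matrix over `ℤ_p`, are phrased via the `p`-adic
norm on `ℚ_p`. -/
def IsGLInvariant (ν : Measure (P1 p)) : Prop :=
  ∀ A : Matrix (Fin 2) (Fin 2) ℚ_[p],
    (∀ i j, ‖A i j‖ ≤ 1) → ‖A.det‖ = 1 →
      ∀ M : Set (P1 p), MeasurableSet M → ν (mobius p A '' M) = ν M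

/-- The embedding `ι : ℚ_p → ℙ¹(ℚ_p)`, `x ↦ [x : 1]`. -/
def iota (x : ℚ_[p]) : P1 p :=
  Projectivization.mk ℚ_[p] ![x, 1] (by
    intro h
    have h1 := congrFun h 1
    simp at h1)

/-! ### Canonical partition functions -/

/-- The pairs `(i,j)` with `i < j`. -/
def pairs (N : ℕ) : Finset (Fin N × Fin N) := Finset.univ.filter fun q => q.1 < q.2

/-- The closed unit ball `ℤ_p = R` inside `ℚ_p`. -/
def Zball : Set ℚ_[p] := {x | ‖x‖ ≤ 1}

/-- The open unit ball `pℤ_p = P` inside `ℚ_p`. -/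
def Pball : Set ℚ_[p] := {x | ‖x‖ < 1}

/-- The one-component canonical partition function
`Z_N(X, β) = ∫_{X^N} ∏_{i<j} |x_i - x_j|^β dμ^N` (as a Bochner integral, whether or not it
converges absolutely). -/
def ZN (μ : Measure ℚ_[p]) [SigmaFinite μ] (X : Set ℚ_[p]) (N : ℕ) (β : ℂ) : ℂ :=
  ∫ x : Fin N → ℚ_[p], ∏ q ∈ pairs N, (‖x q.1 - x q.2‖ : ℂ) ^ β
    ∂(Measure.pi fun _ => μ.restrict X)

/-- The multivariate canonical partition function
`𝒵_I(X, s) = ∫_{X^I} ∏_{i<j, i,j ∈ I} |x_i - x_j|^{s_{ij}} dμ^I` for a subset `I ⊆ [N]`. -/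
def ZI (μ : Measure ℚ_[p]) [SigmaFinite μ] (X : Set ℚ_[p]) {N : ℕ} (I : Finset (Fin N))
    (s : Fin N → Fin N → ℂ) : ℂ :=
  ∫ x : I → ℚ_[p],
    ∏ q ∈ Finset.univ.filter (fun q : (↥I) × (↥I) => (q.1 : Fin N) < (q.2 : Fin N)),
      (‖x q.1 - x q.2‖ : ℂ) ^ s q.1.1 q.2.1
    ∂(Measure.pi fun _ => μ.restrict X)

/-- The multivariate canonical partition function
`𝒵_N(ℙ¹(ℚ_p), s) = ∫_{(ℙ¹(ℚ_p))^N} ∏_{i<j} δ(ξ_i,ξ_j)^{s_{ij}} dν^N`. -/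
def ZP1s (ν : Measure (P1 p)) [SigmaFinite ν] (N : ℕ) (s : Fin N → Fin N → ℂ) : ℂ :=
  ∫ x : Fin N → P1 p, ∏ q ∈ pairs N, ((pdelta p (x q.1) (x q.2) : ℝ) : ℂ) ^ s q.1 q.2
    ∂(Measure.pi fun _ => ν)

/-- The one-component canonical partition function `Z_N(ℙ¹(ℚ_p), β)`. -/
def ZP1 (ν : Measure (P1 p)) [SigmaFinite ν] (N : ℕ) (β : ℂ) : ℂ :=
  ∫ x : Fin N → P1 p, ∏ q ∈ pairs N, ((pdelta p (x q.1) (x q.2) : ℝ) : ℂ) ^ β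
    ∂(Measure.pi fun _ => ν)

/-! ### The quadratic recurrence -/

/-- The factor `ρ_{N,k}(t,β)` appearing in the quadratic recurrence; here
`N.choose 2 = N(N-1)/2`. -/
def rho (N k : ℕ) (t : ℝ) (β : ℂ) : ℂ :=
  if t = 0 then
    (((N : ℂ) + (N.choose 2 : ℂ) * β) * (1 - 2 * (k : ℂ) / (N : ℂ)) + 1) /
      (((N : ℂ) + (N.choose 2 : ℂ) * β) - 1)
  else
    Complex.sinh (((t : ℂ) / 2) * (((N : ℂ) + (N.choose 2 : ℂ) * β) * (1 - 2 * (k : ℂ) / (N : ℂ)) + 1)) /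
      Complex.sinh (((t : ℂ) / 2) * (((N : ℂ) + (N.choose 2 : ℂ) * β) - 1))

/-- The quadratic recurrence: `F 0 = F 1 = 1` and
`F N t β = ∑_{k=1}^{N-1} (k/N) ρ_{N,k}(t,β) F_{N-k}(t,β) F_k(t,β)` for `N ≥ 2`. -/
def F : ℕ → ℝ → ℂ → ℂ
  | 0, _, _ => 1
  | 1, _, _ => 1
  | N + 2, t, β =>
    ∑ k ∈ (Finset.Icc 1 (N + 1)).attach,
      (((k : ℕ) : ℂ) / ((N : ℂ) + 2)) * rho (N + 2) k t β *
        F (N + 2 - (k : ℕ)) t β * F (k : ℕ) t β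
  decreasing_by
  all_goals
    have hk := Finset.mem_Icc.mp k.2
    omega

/-! ### Splitting chains -/

/-- A splitting chain `Λ_0 > Λ_1 > ⋯ > Λ_L` of set partitions of the subset `I ⊆ [N]`,
beginning with the trivial partition `{I}` and ending with the partition of `I` into
singletons.  (The values `Λ ℓ` for `ℓ > L` are required to be `∅`, so that a chain is
determined by the genuine data `Λ_0, …, Λ_L`.) -/
structure SplChain (N : ℕ) (I : Finset (Fin N)) where
  L : ℕ
  Λ : ℕ → Finset (Finset (Fin N))
  nonempty_mem : ∀ ℓ ≤ L, ∀ B ∈ Λ ℓ, B.Nonempty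
  subset_mem : ∀ ℓ ≤ L, ∀ B ∈ Λ ℓ, B ⊆ I
  cover : ∀ ℓ ≤ L, ∀ i ∈ I, ∃! B, B ∈ Λ ℓ ∧ i ∈ B
  first : Λ 0 = {I}
  last : Λ L = I.image fun i => {i}
  refines : ∀ ℓ < L, ∀ B ∈ Λ (ℓ + 1), ∃ C ∈ Λ ℓ, B ⊆ C
  strict : ∀ ℓ < L, Λ (ℓ + 1) ≠ Λ ℓ
  trailing : ∀ ℓ, L < ℓ → Λ ℓ = ∅

variable {N : ℕ} {I : Finset (Fin N)}

/-- The branches of a splitting chain: the non-singleton parts,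
`ℬ(𝔖) = (Λ_0 ∪ ⋯ ∪ Λ_{L-1}) \ Λ_L`. -/
def SplChain.branches (S : SplChain N I) : Finset (Finset (Fin N)) :=
  ((Finset.range S.L).biUnion S.Λ) \ S.Λ S.L

/-- The depth `ℓ_𝔖(λ) = max {ℓ : λ ∈ Λ_ℓ}` of a branch. -/
def SplChain.depth (S : SplChain N I) (lam : Finset (Fin N)) : ℕ :=
  ((Finset.range (S.L + 1)).filter fun ℓ => lam ∈ S.Λ ℓ).sup id

/-- The degree `deg_𝔖(λ) = #{λ' ∈ Λ_{ℓ_𝔖(λ)+1} : λ' ⊆ λ}` of a branch. -/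
def SplChain.degree (S : SplChain N I) (lam : Finset (Fin N)) : ℕ :=
  ((S.Λ (S.depth lam + 1)).filter fun lam' => lam' ⊆ lam).card

/-- A splitting chain is reduced if every branch appears in exactly one partition of the
chain (namely the one at its depth). -/
def SplChain.Reduced (S : SplChain N I) : Prop :=
  ∀ lam ∈ S.branches, ∀ ℓ ≤ S.L, (lam ∈ S.Λ ℓ ↔ ℓ = S.depth lam)

/-- `e_λ(s) = #λ - 1 + ∑_{i<j, i,j ∈ λ} s_{ij}`. -/
def eexp (lam : Finset (Fin N)) (s : Fin N → Fin N → ℂ) : ℂ :=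
  (lam.card : ℂ) - 1 + ∑ q ∈ (pairs N).filter fun q => q.1 ∈ lam ∧ q.2 ∈ lam, s q.1 q.2

/-- Membership in `Ω_I`: `Re e_λ(s) > 0` for every `λ ⊆ I` with `#λ > 1`. -/
def InOmega (I : Finset (Fin N)) (s : Fin N → Fin N → ℂ) : Prop :=
  ∀ lam ⊆ I, 1 < lam.card → 0 < (eexp lam s).re


/-- The multivariate canonical partition function `𝒵_N(ℤ_p, s)` over `Fin N`-indexed tuples. -/
def ZNs (μ : Measure ℚ_[p]) [SigmaFinite μ] (X : Set ℚ_[p]) (N : ℕ)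
    (s : Fin N → Fin N → ℂ) : ℂ :=
  ∫ x : Fin N → ℚ_[p], ∏ q ∈ pairs N, (‖x q.1 - x q.2‖ : ℂ) ^ s q.1 q.2
    ∂(Measure.pi fun _ => μ.restrict X)

/-- The ball `p^v ℤ_p = {x : |x| ≤ p^{-v}}` in `ℚ_p`. -/
def pvball (v : ℤ) : Set ℚ_[p] := {x | ‖x‖ ≤ (p : ℝ) ^ (-v)}

/-- `G_N(q,β) = N! q^{(1/2)(N choose 2)β} F_N(log q, β)`. -/
def GN (N : ℕ) (β : ℂ) (q : ℝ) : ℂ :=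
  (N.factorial : ℂ) * (q : ℂ) ^ ((N.choose 2 : ℂ) * β / 2) * F N (Real.log q) β

/-- `H_N(q,β)`, the efficient formula for `Z_N(ℙ¹(K),β)` as a function of `q`. -/
def HN (N : ℕ) (β : ℂ) (q : ℝ) : ℂ :=
  (N.factorial : ℂ) * ∑ k ∈ Finset.range (N + 1),
    Complex.cosh (((Real.log q : ℂ) / 2) * ((N : ℂ) + (N.choose 2 : ℂ) * β) *
          (1 - 2 * (k : ℂ) / (N : ℂ))) /
        (2 * Complex.cosh ((Real.log q : ℂ) / 2)) ^ N *
      F (N - k) (Real.log q) β * F k (Real.log q) β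

end

/-
Reduction modulo `p` splits `ℙ¹(ℚ_p)` into `p + 1` residue discs, one for each point of `ℙ¹(𝔽_p)`.
They are permuted transitively by `GL₂(ℤ_p)`, so each has a chart by `pℤ_p` which turns `δ` into
`|x - y|` and, by uniqueness of Haar measure on `pℤ_p`, turns `ν` into `p / (p + 1)` times `μ`.
Points in distinct discs are at distance `1`, so the Boltzmann weight of a configuration is the
product of the weights of its restrictions to the discs. Sorting the configurations by the disc
containing each point, the multinomial coefficients counting the assignments with prescribed
occupation numbers `N_k` are absorbed by the factorials.
-/

section Counting

open Finset

variable {ι κ : Type*} [Fintype ι] [Fintype κ] [DecidableEq ι] [DecidableEq κ]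

theorem card_filter_card_fiber_eq_multinomial (n : κ → ℕ) (hn : ∑ k, n k = Fintype.card ι) :
    #{f : ι → κ | (fun k ↦ Fintype.card {i // f i = k}) = n} = Nat.multinomial univ n := by
  let d : κ →₀ ℕ := Finsupp.equivFunOnFinite.symm n
  have hd : d.sum (fun _ m ↦ m) = Fintype.card ι := by
    rw [Finsupp.sum_fintype _ _ fun _ ↦ rfl]
    exact hn
  have expand : (∑ k, MvPolynomial.X k : MvPolynomial κ ℕ) ^ Fintype.card ι =
      ∑ f : ι → κ, MvPolynomial.monomial
        (Finsupp.equivFunOnFinite.symm fun k ↦ Fintype.card {i // f i = k}) 1 := by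
    rw [← Finset.card_univ, ← Finset.prod_const, prod_univ_sum, Fintype.piFinset_univ]
    refine sum_congr rfl fun f _ ↦ ?_
    rw [← Fintype.prod_fiberwise' f, MvPolynomial.monomial_eq, map_one, one_mul,
      Finsupp.prod_fintype _ _ fun _ ↦ pow_zero _]
    simp
  have coeff_eq := MvPolynomial.coeff_sum_X_pow_of_fintype (R := ℕ) d (Fintype.card ι)
  rw [if_pos hd, expand, MvPolynomial.coeff_sum,
    ← Finsupp.multinomial_of_support_subset (subset_univ _)] at coeff_eq
  simp only [MvPolynomial.coeff_monomial, sum_boole, Nat.cast_id] at coeff_eq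
  convert! coeff_eq using 3
  simp [d]

theorem sum_card_fiber {M : Type*} [AddCommMonoid M] (F : (κ → ℕ) → M) :
    ∑ f : ι → κ, F (fun k ↦ Fintype.card {i // f i = k}) =
      ∑ n ∈ piAntidiag univ (Fintype.card ι), Nat.multinomial univ n • F n := by
  have maps_to (f : ι → κ) :
      (fun k ↦ Fintype.card {i // f i = k}) ∈ piAntidiag univ (Fintype.card ι) := by
    have : ∑ k, Fintype.card {i // f i = k} = Fintype.card ι := by
      rw [← Fintype.card_sigma, Fintype.card_congr (Equiv.sigmaFiberEquiv f)]
    simpa using this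
  rw [← sum_fiberwise_of_maps_to fun f _ ↦ maps_to f]
  refine sum_congr rfl fun n hn ↦ ?_
  rw [← card_filter_card_fiber_eq_multinomial n (mem_piAntidiag.1 hn).1, ← sum_const]
  refine sum_congr rfl fun f hf ↦ ?_
  rw [(mem_filter.1 hf).2]

theorem sum_prod_card_fiber_div_factorial {K : Type*} [Field K] [CharZero K] (a : κ → ℕ → K) :
    (∑ f : ι → κ, ∏ k, a k (Fintype.card {i // f i = k})) / (Fintype.card ι).factorial =
      ∑ n ∈ piAntidiag univ (Fintype.card ι), ∏ k, a k (n k) / (n k).factorial := by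
  rw [sum_card_fiber fun n ↦ ∏ k, a k (n k), sum_div]
  refine sum_congr rfl fun n hn ↦ ?_
  have spec : (∏ k, ((n k).factorial : K)) * Nat.multinomial univ n =
      (Fintype.card ι).factorial := by
    rw [← (mem_piAntidiag.1 hn).1, ← Nat.multinomial_spec univ n]
    push_cast
    rfl
  have hcard : ((Fintype.card ι).factorial : K) ≠ 0 := mod_cast Nat.factorial_ne_zero _
  rw [prod_div_distrib, nsmul_eq_mul, div_eq_div_iff hcard
    (prod_ne_zero_iff.2 fun k _ ↦ mod_cast Nat.factorial_ne_zero _), ← spec]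
  ring

end Counting

section PairProd

variable {ι κ X M : Type*} [Fintype ι] [LinearOrder ι] [CommMonoid M]

/-- The Boltzmann weight `∏_{i<j} g(x_i, x_j)` of a configuration `x` of particles labelled by
`ι`, where `g` is a pair interaction. -/
def pairProd (g : X → X → M) (x : ι → X) : M :=
  ∏ q : ι × ι with q.1 < q.2, g (x q.1) (x q.2)

theorem pairProd_comp_orderIso [Fintype κ] [LinearOrder κ] (e : ι ≃o κ) (g : X → X → M)
    (x : κ → X) : pairProd g (x ∘ e) = pairProd g x :=
  Finset.prod_equiv (e.toEquiv.prodCongr e.toEquiv) (by simp) fun _ _ ↦ rfl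

theorem pairProd_eq_prod_fiber [Fintype κ] [DecidableEq κ] {f : ι → κ} {g : X → X → M}
    {x : ι → X} (h : ∀ i j, f i ≠ f j → g (x i) (x j) = 1) :
    pairProd g x = ∏ k, pairProd g fun i : {i // f i = k} ↦ x i := by
  have same_block : pairProd g x =
      ∏ q : ι × ι with q.1 < q.2 ∧ f q.1 = f q.2, g (x q.1) (x q.2) := by
    rw [← Finset.filter_filter, Finset.prod_filter_of_ne fun q _ ↦ not_imp_comm.1 (h q.1 q.2)]
    rfl
  rw [same_block, ← Finset.prod_fiberwise _ fun q ↦ f q.1]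
  refine Finset.prod_congr rfl fun k _ ↦ Eq.symm ?_
  refine Finset.prod_nbij (fun q ↦ (q.1.1, q.2.1)) ?_ ?_ ?_ fun _ _ ↦ rfl
  · rintro ⟨⟨i, rfl⟩, j, hj⟩
    simp +contextual [hj]
  · rintro ⟨⟨i, hi⟩, j, hj⟩ - ⟨⟨i', hi'⟩, j', hj'⟩ - h
    simpa using h
  · rintro ⟨i, j⟩ hq
    simp only [Finset.coe_filter, Finset.mem_filter, Finset.mem_univ, true_and,
      Set.mem_ofPred_eq] at hq
    exact ⟨(⟨i, hq.2⟩, ⟨j, hq.1.2 ▸ hq.2⟩), by simpa using hq.1.1, rfl⟩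

end PairProd

section Fiberwise

variable {ι κ : Type*} (f : ι → κ) {X : ι → Type*} [∀ i, MeasurableSpace (X i)]

/-- Reindexing of a product over `ι` as an iterated product over the fibres of `f : ι → κ`, used
to apply Fubini's theorem block by block. -/
def piFiberEquiv : (∀ i, X i) ≃ᵐ ∀ k, ∀ i : {i // f i = k}, X i where
  toFun x _ i := x i
  invFun y i := y (f i) ⟨i, rfl⟩
  left_inv _ := rfl
  right_inv y := by
    ext k ⟨i, rfl⟩
    rfl
  measurable_toFun := by
    refine measurable_pi_lambda _ fun k ↦ measurable_pi_lambda _ fun i ↦ ?_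
    exact measurable_pi_apply _
  measurable_invFun := by
    refine measurable_pi_lambda _ fun i ↦ ?_
    exact (measurable_pi_apply (⟨i, rfl⟩ : {j // f j = f i})).comp (measurable_pi_apply (f i))

variable [Fintype ι] [Fintype κ] [DecidableEq κ] (μ : ∀ i, Measure (X i)) [∀ i, SigmaFinite (μ i)]

theorem measurePreserving_piFiberEquiv_symm :
    MeasurePreserving (piFiberEquiv f (X := X)).symm
      (Measure.pi fun k ↦ Measure.pi fun i : {i // f i = k} ↦ μ i) (Measure.pi μ) := by
  refine ⟨MeasurableEquiv.measurable _, (Measure.pi_eq fun s _ ↦ ?_).symm⟩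
  have preimage_pi : (piFiberEquiv f).symm ⁻¹' Set.univ.pi s =
      Set.univ.pi fun k ↦ Set.univ.pi fun i : {i // f i = k} ↦ s i := by
    ext y
    simp only [Set.mem_preimage, Set.mem_univ_pi]
    refine ⟨?_, fun h i ↦ h (f i) ⟨i, rfl⟩⟩
    rintro h k ⟨i, rfl⟩
    exact h i
  rw [MeasurableEquiv.map_apply, preimage_pi, Measure.pi_pi]
  simp only [Measure.pi_pi]
  exact Fintype.prod_fiberwise f fun i ↦ μ i (s i)

theorem integral_prod_fiber {𝕜 : Type*} [RCLike 𝕜] (G : ∀ k, (∀ i : {i // f i = k}, X i) → 𝕜) :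
    ∫ x, ∏ k, G k (fun i ↦ x i) ∂Measure.pi μ =
      ∏ k, ∫ x, G k x ∂Measure.pi fun i : {i // f i = k} ↦ μ i := by
  rw [← integral_fintype_prod_eq_prod,
    ← (measurePreserving_piFiberEquiv_symm f μ).symm.integral_comp']
  rfl

end Fiberwise

theorem measurableEmbedding_piMap {ι : Type*} [Countable ι] {X Y : ι → Type*}
    [∀ i, MeasurableSpace (X i)] [∀ i, MeasurableSpace (Y i)] {φ : ∀ i, X i → Y i}
    (hφ : ∀ i, MeasurableEmbedding (φ i)) :
    MeasurableEmbedding fun (x : ∀ i, X i) i ↦ φ i (x i) := by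
  have range_eq : Set.range (fun (x : ∀ i, X i) i ↦ φ i (x i)) =
      Set.univ.pi fun i ↦ Set.range (φ i) := Set.range_piMap φ
  have mem_range (y : Set.range fun (x : ∀ i, X i) (i : ι) ↦ φ i (x i)) (i : ι) :
      y.1 i ∈ Set.range (φ i) := by
    obtain ⟨x, hx⟩ := y.2
    exact ⟨x i, congrFun hx i⟩
  refine .of_measurable_inverse_on_range
    (g := fun y i ↦ (hφ i).equivRange.symm ⟨y.1 i, mem_range y i⟩) ?_ ?_ ?_ ?_
  · exact measurable_pi_lambda _ fun i ↦ (hφ i).measurable.comp (measurable_pi_apply i)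
  · exact range_eq ▸ MeasurableSet.univ_pi fun i ↦ (hφ i).measurableSet_range
  · refine measurable_pi_lambda _ fun i ↦ (hφ i).equivRange.symm.measurable.comp ?_
    exact ((measurable_pi_apply i).comp measurable_subtype_coe).subtype_mk
  · intro x
    ext i
    exact (hφ i).equivRange_symm_apply_mk (x i)

section PartitionFunction

open Function

variable {X Y 𝕜 ι κ : Type*} [MeasurableSpace X] [MeasurableSpace Y] [RCLike 𝕜]
  [Fintype ι] [LinearOrder ι]

/-- The canonical partition function `∫ ∏_{i<j} g(x_i, x_j) dτ^ι`, with the particles labelled by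
an arbitrary finite linear order `ι` so that blocks of `Fin N` are allowed. -/
noncomputable def partitionFunction (ι : Type*) [Fintype ι] [LinearOrder ι] (τ : Measure X)
    (g : X → X → 𝕜) : 𝕜 :=
  ∫ x : ι → X, pairProd g x ∂Measure.pi fun _ ↦ τ

theorem partitionFunction_congr_orderIso [Fintype κ] [LinearOrder κ] (e : ι ≃o κ)
    (τ : Measure X) [SigmaFinite τ] (g : X → X → 𝕜) :
    partitionFunction ι τ g = partitionFunction κ τ g := by
  rw [partitionFunction, partitionFunction,
    ← (measurePreserving_piCongrLeft (fun _ ↦ τ) e.toEquiv).integral_comp']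
  refine integral_congr_ae (.of_forall fun x ↦ ?_)
  simp only
  rw [← pairProd_comp_orderIso e]
  congr 1 with i
  exact (Equiv.piCongrLeft_apply_apply (fun _ : κ ↦ X) e.toEquiv x i).symm

theorem partitionFunction_eq_fin (τ : Measure X) [SigmaFinite τ] (g : X → X → 𝕜) :
    partitionFunction ι τ g = partitionFunction (Fin (Fintype.card ι)) τ g :=
  partitionFunction_congr_orderIso (Fintype.orderIsoFinOfCardEq ι rfl).symm τ g

theorem partitionFunction_smul_measure (c : NNReal) (τ : Measure X) [SigmaFinite τ]
    (g : X → X → 𝕜) :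
    partitionFunction ι (c • τ) g = (c : ℝ) ^ Fintype.card ι • partitionFunction ι τ g := by
  have pi_smul : Measure.pi (fun _ : ι ↦ c • τ) = c ^ Fintype.card ι • Measure.pi fun _ ↦ τ := by
    refine Measure.pi_eq fun s _ ↦ ?_
    rw [Measure.smul_apply, Measure.pi_pi]
    simp only [Measure.smul_apply, ENNReal.smul_def, smul_eq_mul, Finset.prod_mul_distrib,
      Finset.prod_const, Finset.card_univ, ENNReal.coe_pow]
  rw [partitionFunction, pi_smul, integral_smul_nnreal_measure]
  rfl

theorem partitionFunction_map {φ : X → Y} (hφ : MeasurableEmbedding φ) (τ : Measure X)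
    [SigmaFinite τ] (g : Y → Y → 𝕜) :
    partitionFunction ι (τ.map φ) g = partitionFunction ι τ fun x y ↦ g (φ x) (φ y) := by
  have := hφ.sigmaFinite_map (μ := τ)
  rw [partitionFunction, ← Measure.pi_map_pi fun _ ↦ hφ.measurable.aemeasurable]
  exact (measurableEmbedding_piMap fun _ ↦ hφ).integral_map _

theorem partitionFunction_restrict_congr {μ : Measure X} [SigmaFinite μ] {s : Set X}
    (hs : MeasurableSet s) {g h : X → X → 𝕜} (hgh : ∀ x ∈ s, ∀ y ∈ s, g x y = h x y) :
    partitionFunction ι (μ.restrict s) g = partitionFunction ι (μ.restrict s) h := by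
  rw [partitionFunction, partitionFunction, ← Measure.restrict_pi_pi]
  refine setIntegral_congr_fun (.univ_pi fun _ ↦ hs) fun x hx ↦ ?_
  exact Finset.prod_congr rfl fun q _ ↦ hgh _ (hx q.1 trivial) _ (hx q.2 trivial)

theorem integrable_pairProd {τ : Measure X} [IsFiniteMeasure τ] {g : X → X → 𝕜}
    (hg : Measurable (uncurry g)) (le_one : ∀ x y, ‖g x y‖ ≤ 1) :
    Integrable (pairProd g) (Measure.pi fun _ : ι ↦ τ) := by
  have measurable_pairProd : Measurable (pairProd g : (ι → X) → 𝕜) :=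
    Finset.measurable_prod _ fun q _ ↦
      (hg.comp ((measurable_pi_apply q.1).prodMk (measurable_pi_apply q.2)) :
        Measurable fun x : ι → X ↦ uncurry g (x q.1, x q.2))
  refine .of_bound measurable_pairProd.aestronglyMeasurable 1 (.of_forall fun x ↦ ?_)
  rw [pairProd, norm_prod]
  exact Finset.prod_le_one (fun _ _ ↦ norm_nonneg _) fun q _ ↦ le_one (x q.1) (x q.2)

variable [Fintype κ] {μ : Measure X} [SigmaFinite μ] {s : κ → Set X} {g : X → X → 𝕜}

theorem partitionFunction_restrict_iUnion [DecidableEq κ] (hs : ∀ k, MeasurableSet (s k))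
    (disjoint : Pairwise (Disjoint on s))
    (hg : ∀ k l, k ≠ l → ∀ x ∈ s k, ∀ y ∈ s l, g x y = 1)
    (hint : Integrable (pairProd g) (Measure.pi fun _ : ι ↦ μ.restrict (⋃ k, s k))) :
    partitionFunction ι (μ.restrict (⋃ k, s k)) g =
      ∑ f : ι → κ, ∏ k, partitionFunction {i // f i = k} (μ.restrict (s k)) g := by
  let box (f : ι → κ) : Set (ι → X) := Set.univ.pi fun i ↦ s (f i)
  have measurableSet_box (f : ι → κ) : MeasurableSet (box f) := .univ_pi fun i ↦ hs (f i)
  have disjoint_box : Pairwise (Disjoint on box) := by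
    intro f f' hne
    obtain ⟨i, hi⟩ := Function.ne_iff.1 hne
    refine Set.disjoint_left.2 fun x hx hx' ↦ Set.disjoint_left.1 (disjoint hi)
      (hx i trivial) (hx' i trivial)
  have iUnion_box : ⋃ f, box f = Set.univ.pi fun _ ↦ ⋃ k, s k :=
    Set.iUnion_univ_pi fun _ ↦ s
  have integral_box (f : ι → κ) : ∫ x in box f, pairProd g x ∂Measure.pi (fun _ ↦ μ) =
      ∏ k, partitionFunction {i // f i = k} (μ.restrict (s k)) g := by
    rw [setIntegral_congr_fun (measurableSet_box f) fun x hx ↦ pairProd_eq_prod_fiber (f := f)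
      fun i j hij ↦ hg _ _ hij _ (hx i trivial) _ (hx j trivial), Measure.restrict_pi_pi,
      integral_prod_fiber f (X := fun _ ↦ X) (fun i ↦ μ.restrict (s (f i))) fun _ ↦ pairProd g]
    refine Finset.prod_congr rfl fun k _ ↦ ?_
    rw [partitionFunction]
    congr! with ⟨i, hi⟩
  have hint_box : IntegrableOn (pairProd g) (⋃ f, box f) (Measure.pi fun _ ↦ μ) := by
    rwa [IntegrableOn, iUnion_box, Measure.restrict_pi_pi]
  rw [partitionFunction, ← Measure.restrict_pi_pi, ← iUnion_box,
    integral_iUnion_fintype measurableSet_box disjoint_box fun f ↦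
      hint_box.mono_set (Set.subset_iUnion box f)]
  exact Finset.sum_congr rfl fun f _ ↦ integral_box f

theorem partitionFunction_restrict_iUnion_div_factorial [DecidableEq κ]
    (hs : ∀ k, MeasurableSet (s k)) (disjoint : Pairwise (Disjoint on s))
    (hg : ∀ k l, k ≠ l → ∀ x ∈ s k, ∀ y ∈ s l, g x y = 1)
    (hint : Integrable (pairProd g) (Measure.pi fun _ : ι ↦ μ.restrict (⋃ k, s k))) :
    partitionFunction ι (μ.restrict (⋃ k, s k)) g / (Fintype.card ι).factorial =
      ∑ n ∈ Finset.piAntidiag Finset.univ (Fintype.card ι),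
        ∏ k, partitionFunction (Fin (n k)) (μ.restrict (s k)) g / (n k).factorial := by
  rw [partitionFunction_restrict_iUnion hs disjoint hg hint, ← sum_prod_card_fiber_div_factorial
    fun k n ↦ partitionFunction (Fin n) (μ.restrict (s k)) g]
  refine congrArg (· / _) (Finset.sum_congr rfl fun f _ ↦ Finset.prod_congr rfl fun k _ ↦ ?_)
  exact partitionFunction_eq_fin (μ.restrict (s k)) g

end PartitionFunction

section HaarUniqueness

variable {G : Type*} [TopologicalSpace G] [SecondCountableTopology G] [AddGroup G]
  [IsTopologicalAddGroup G] [MeasurableSpace G] [BorelSpace G]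

theorem restrict_addSubgroup_eq_div_smul {H : AddSubgroup G} (hH : MeasurableSet (H : Set G))
    (μ ν : Measure G) [VAddInvariantMeasure H G μ] [VAddInvariantMeasure H G ν]
    (hμ : μ H ≠ ⊤) (hν₀ : ν H ≠ 0) (hν : ν H ≠ ⊤) :
    μ.restrict H = (μ H / ν H) • ν.restrict H := by
  have emb : MeasurableEmbedding ((↑) : H → G) := .subtype_coe hH
  have comap_univ (τ : Measure G) : τ.comap ((↑) : H → G) Set.univ = τ H := by
    simp [emb.comap_apply]
  have invariant (τ : Measure G) [VAddInvariantMeasure H G τ] :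
      (τ.comap ((↑) : H → G)).IsAddLeftInvariant := by
    refine (forall_measure_preimage_add_iff _).1 fun a t _ ↦ ?_
    rw [emb.comap_apply, emb.comap_apply, ← measure_preimage_vadd τ a ((↑) '' t)]
    congr 1
    ext x
    refine ⟨?_, ?_⟩
    · rintro ⟨y, hy, rfl⟩
      exact ⟨a + y, hy, rfl⟩
    · rintro ⟨y, hy, hyx⟩
      exact ⟨-a + y, by simpa using hy, by simp [hyx, AddSubgroup.vadd_def]⟩
  have := invariant μ
  have := invariant ν
  have : IsFiniteMeasure (μ.comap ((↑) : H → G)) := ⟨by rwa [comap_univ, lt_top_iff_ne_top]⟩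
  have : IsFiniteMeasure (ν.comap ((↑) : H → G)) := ⟨by rwa [comap_univ, lt_top_iff_ne_top]⟩
  have : SecondCountableTopology H := TopologicalSpace.Subtype.secondCountableTopology _
  have proportional := measure_eq_sub_vadd (μ.comap ((↑) : H → G)) (ν.comap ((↑) : H → G))
    (s := Set.univ) (by rwa [comap_univ]) (by rwa [comap_univ])
  rw [comap_univ, comap_univ] at proportional
  have map_comap (τ : Measure G) : (τ.comap ((↑) : H → G)).map (↑) = τ.restrict H :=
    map_comap_subtype_coe hH τ
  rw [← map_comap, ← map_comap, proportional, Measure.map_smul]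

end HaarUniqueness

variable {p : ℕ} [Fact p.Prime]

section Residues

theorem existsUnique_fin_norm_sub_lt_one {x : ℚ_[p]} (hx : ‖x‖ ≤ 1) :
    ∃! k : Fin p, ‖x - (k : ℕ)‖ < 1 := by
  obtain ⟨k, ⟨hk, hkx⟩, unique⟩ := PadicInt.existsUnique_mem_range (⟨x, hx⟩ : ℤ_[p])
  rw [IsLocalRing.mem_maximalIdeal, PadicInt.mem_nonunits] at hkx
  refine ⟨⟨k, hk⟩, hkx, fun l hl ↦ Fin.ext (unique l ⟨l.2, ?_⟩)⟩
  rw [IsLocalRing.mem_maximalIdeal, PadicInt.mem_nonunits]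
  exact hl

theorem norm_natCast_sub_natCast_eq_one {k l : Fin p} (h : k ≠ l) :
    ‖((k : ℕ) : ℚ_[p]) - (l : ℕ)‖ = 1 := by
  have le_one : ‖((k : ℕ) : ℚ_[p]) - (l : ℕ)‖ ≤ 1 := by
    simpa using Padic.norm_int_le_one (p := p) ((k : ℕ) - (l : ℕ) : ℤ)
  refine le_one.eq_of_not_lt fun lt_one ↦ h ?_
  have hk : ‖((k : ℕ) : ℚ_[p])‖ ≤ 1 := IsUltrametricDist.norm_natCast_le_one _ k
  exact (existsUnique_fin_norm_sub_lt_one hk).unique (by simp) lt_one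

theorem norm_add_eq_one {x y : ℚ_[p]} (hx : ‖x‖ = 1) (hy : ‖y‖ < 1) : ‖x + y‖ = 1 := by
  rw [IsUltrametricDist.norm_add_eq_max_of_norm_ne_norm (by rw [hx]; exact hy.ne'), hx,
    max_eq_left hy.le]

theorem norm_sub_lt_one {x y : ℚ_[p]} (hx : ‖x‖ < 1) (hy : ‖y‖ < 1) : ‖x - y‖ < 1 := by
  rw [sub_eq_add_neg]
  exact (IsUltrametricDist.norm_add_le_max x (-y)).trans_lt (max_lt hx (norm_neg y ▸ hy))

theorem norm_natCast_add_le_one (k : ℕ) {x : ℚ_[p]} (hx : ‖x‖ < 1) : ‖k + x‖ ≤ 1 :=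
  (IsUltrametricDist.norm_add_le_max _ _).trans
    (max_le (IsUltrametricDist.norm_natCast_le_one _ k) hx.le)

variable (p) in
/-- The maximal ideal `pℤ_p`, as a subgroup of the additive group `ℚ_p`. -/
noncomputable def maximalIdealAddSubgroup : AddSubgroup ℚ_[p] :=
  (IsUltrametricDist.ball_openAddSubgroup ℚ_[p] one_pos).toAddSubgroup

variable (p) in
theorem coe_maximalIdealAddSubgroup : (maximalIdealAddSubgroup p : Set ℚ_[p]) = Pball p := by
  ext x
  exact mem_ball_zero_iff

variable (p) in
theorem measurableSet_Pball : MeasurableSet (Pball p) :=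
  (isOpen_lt continuous_norm continuous_const).measurableSet

theorem iUnion_image_add_Pball :
    ⋃ k : Fin p, (((k : ℕ) : ℚ_[p]) + ·) '' Pball p = Zball p := by
  ext x
  simp only [Set.image_add_left, Set.mem_iUnion, Set.mem_preimage, neg_add_eq_sub]
  refine ⟨fun ⟨k, hk⟩ ↦ ?_, fun hx ↦ (existsUnique_fin_norm_sub_lt_one hx).exists⟩
  exact add_sub_cancel ((k : ℕ) : ℚ_[p]) x ▸ norm_natCast_add_le_one k hk

theorem pairwise_disjoint_image_add_Pball :
    Pairwise (Function.onFun Disjoint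
      fun k : Fin p ↦ (((k : ℕ) : ℚ_[p]) + ·) '' Pball p) := by
  intro k l hkl
  refine Set.disjoint_left.2 ?_
  rintro _ ⟨x, hx, rfl⟩ ⟨y, hy, hxy⟩
  have sub_eq : ((k : ℕ) : ℚ_[p]) - (l : ℕ) = y - x := by linear_combination -hxy
  have lt_one : ‖((k : ℕ) : ℚ_[p]) - (l : ℕ)‖ < 1 := sub_eq ▸ norm_sub_lt_one hy hx
  exact lt_one.ne (norm_natCast_sub_natCast_eq_one hkl)

theorem measure_Zball_eq_mul_measure_Pball (μ : Measure ℚ_[p]) [μ.IsAddLeftInvariant] :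
    μ (Zball p) = p * μ (Pball p) := by
  have measurableSet_image (k : Fin p) :
      MeasurableSet ((((k : ℕ) : ℚ_[p]) + ·) '' Pball p) :=
    (MeasurableEquiv.addLeft ((k : ℕ) : ℚ_[p])).measurableSet_image.2 (measurableSet_Pball p)
  rw [← iUnion_image_add_Pball, measure_iUnion pairwise_disjoint_image_add_Pball
    measurableSet_image]
  simp [tsum_fintype, Set.image_add_left, measure_preimage_add]

end Residues

section Action

open Matrix
open scoped Pointwise

/-- The action of `GL₂(ℤ_p)` on `ℙ¹(ℚ_p)` by Möbius transformations, restricted from that of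
`GL₂(ℚ_p)`. -/
noncomputable instance : MulAction (GL (Fin 2) ℤ_[p]) (P1 p) :=
  MulAction.compHom _ (GeneralLinearGroup.map (n := Fin 2) (algebraMap ℤ_[p] ℚ_[p]))

theorem map_coe_mulVec_ne_zero (g : GL (Fin 2) ℤ_[p]) {v : Fin 2 → ℚ_[p]} (hv : v ≠ 0) :
    g.val.map (algebraMap ℤ_[p] ℚ_[p]) *ᵥ v ≠ 0 :=
  (smul_ne_zero_iff_ne (GeneralLinearGroup.map (algebraMap ℤ_[p] ℚ_[p]) g)).2 hv

theorem smul_P1_mk (g : GL (Fin 2) ℤ_[p]) {v : Fin 2 → ℚ_[p]} (hv : v ≠ 0) :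
    g • (Projectivization.mk ℚ_[p] v hv : P1 p) =
      Projectivization.mk ℚ_[p] (g.val.map (algebraMap ℤ_[p] ℚ_[p]) *ᵥ v)
        (map_coe_mulVec_ne_zero g hv) :=
  rfl

theorem mobius_map_coe (g : GL (Fin 2) ℤ_[p]) (ξ : P1 p) :
    mobius p (g.val.map (algebraMap ℤ_[p] ℚ_[p])) ξ = g • ξ := by
  rw [mobius, dif_pos (map_coe_mulVec_ne_zero g ξ.rep_nonzero), ← smul_P1_mk g ξ.rep_nonzero,
    ξ.mk_rep]

theorem IsGLInvariant.smulInvariantMeasure {ν : Measure (P1 p)} (hν : IsGLInvariant p ν) :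
    SMulInvariantMeasure (GL (Fin 2) ℤ_[p]) (P1 p) ν := by
  refine ⟨fun g M hM ↦ ?_⟩
  have norm_det : ‖((g⁻¹).val.map (algebraMap ℤ_[p] ℚ_[p])).det‖ = 1 :=
    (congrArg norm (RingHom.map_det (algebraMap ℤ_[p] ℚ_[p]) (g⁻¹).val)).symm.trans
      (PadicInt.isUnit_iff.1 (GeneralLinearGroup.det g⁻¹).isUnit)
  have image_eq : mobius p ((g⁻¹).val.map (algebraMap ℤ_[p] ℚ_[p])) '' M = g⁻¹ • M :=
    Set.image_congr fun ξ _ ↦ mobius_map_coe g⁻¹ ξ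
  rw [Set.preimage_smul, ← image_eq]
  exact hν _ (fun i j ↦ ((g⁻¹).val i j).2) norm_det M hM

theorem isQuotientMap_P1_mk : Topology.IsQuotientMap
    fun v : {v : Fin 2 → ℚ_[p] // v ≠ 0} ↦ (Projectivization.mk ℚ_[p] v.1 v.2 : P1 p) :=
  isQuotientMap_quotient_mk'

instance : ContinuousConstSMul (GL (Fin 2) ℤ_[p]) (P1 p) where
  continuous_const_smul g := by
    have continuous_lift : Continuous fun v : {v : Fin 2 → ℚ_[p] // v ≠ 0} ↦
        (⟨g.val.map (algebraMap ℤ_[p] ℚ_[p]) *ᵥ v.1, map_coe_mulVec_ne_zero g v.2⟩ :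
          {v : Fin 2 → ℚ_[p] // v ≠ 0}) :=
      (continuous_const.matrix_mulVec continuous_subtype_val).subtype_mk _
    exact isQuotientMap_P1_mk.continuous_iff.2
      (isQuotientMap_P1_mk.continuous.comp continuous_lift)

end Action

section AffineChart

theorem cons_one_ne_zero (x : ℚ_[p]) : ![x, 1] ≠ 0 :=
  fun h ↦ one_ne_zero (congrFun h 1)

theorem one_cons_ne_zero (x : ℚ_[p]) : ![1, x] ≠ 0 :=
  fun h ↦ one_ne_zero (congrFun h 0)

theorem mk_eq_iota {v : Fin 2 → ℚ_[p]} (hv : v ≠ 0) (h : v 1 ≠ 0) :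
    Projectivization.mk ℚ_[p] v hv = iota p (v 0 / v 1) := by
  refine (Projectivization.mk_eq_mk_iff' ..).2 ⟨v 1, ?_⟩
  ext i
  fin_cases i <;> simp [mul_div_cancel₀, h]

theorem mk_mem_image_iota_iff {v : Fin 2 → ℚ_[p]} (hv : v ≠ 0) {U : Set ℚ_[p]} :
    Projectivization.mk ℚ_[p] v hv ∈ iota p '' U ↔ v 1 ≠ 0 ∧ v 0 / v 1 ∈ U := by
  refine ⟨?_, fun h ↦ mk_eq_iota hv h.1 ▸ ⟨_, h.2, rfl⟩⟩
  rintro ⟨x, hx, hxv⟩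
  obtain ⟨a, rfl⟩ := (Projectivization.mk_eq_mk_iff' ..).1 hxv.symm
  have ha : a ≠ 0 := by
    rintro rfl
    simp at hv
  simpa [ha] using hx

theorem isOpenEmbedding_iota : Topology.IsOpenEmbedding (iota p) := by
  have continuous_vec : Continuous fun x : ℚ_[p] ↦
      (⟨![x, 1], cons_one_ne_zero x⟩ : {v : Fin 2 → ℚ_[p] // v ≠ 0}) := by
    fun_prop
  refine .of_continuous_injective_isOpenMap
    (isQuotientMap_P1_mk.continuous.comp continuous_vec) ?_ fun U hU ↦ ?_
  · intro x y hxy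
    have : iota p x ∈ iota p '' {y} := ⟨y, rfl, hxy.symm⟩
    simpa using ((mk_mem_image_iota_iff (cons_one_ne_zero x)).1 this).2
  · rw [← isQuotientMap_P1_mk.isOpen_preimage]
    have preimage_eq : (fun v : {v : Fin 2 → ℚ_[p] // v ≠ 0} ↦
        (Projectivization.mk ℚ_[p] v.1 v.2 : P1 p)) ⁻¹' (iota p '' U) =
        {v | v.1 1 ≠ 0} ∩ (fun v ↦ v.1 0 / v.1 1) ⁻¹' U :=
      Set.ext fun v ↦ mk_mem_image_iota_iff v.2
    have continuous_coord (i : Fin 2) :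
        Continuous fun v : {v : Fin 2 → ℚ_[p] // v ≠ 0} ↦ v.1 i :=
      (continuous_apply i).comp continuous_subtype_val
    rw [preimage_eq]
    exact ((continuous_coord 0).continuousOn.div (continuous_coord 1).continuousOn
      fun _ hv ↦ hv).isOpen_inter_preimage (isOpen_ne_fun (continuous_coord 1) continuous_const) hU

theorem eq_mk_of_notMem_range_iota {ξ : P1 p} (hξ : ξ ∉ Set.range (iota p)) :
    ξ = Projectivization.mk ℚ_[p] ![1, 0] (one_cons_ne_zero 0) := by
  induction ξ using Projectivization.ind with | h v hv =>
  have h1 : v 1 = 0 := by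
    by_contra h1
    exact hξ ⟨_, (mk_eq_iota hv h1).symm⟩
  refine (Projectivization.mk_eq_mk_iff' ..).2 ⟨v 0, ?_⟩
  ext i
  fin_cases i <;> simp [h1]

end AffineChart

section SphericalMetric

theorem sdelta_smul_smul (x y : Fin 2 → ℚ_[p]) {a b : ℚ_[p]} (ha : a ≠ 0) (hb : b ≠ 0) :
    sdelta p (a • x) (b • y) = sdelta p x y := by
  have num_eq : a * x 0 * (b * y 1) - a * x 1 * (b * y 0) =
      a * b * (x 0 * y 1 - x 1 * y 0) := by ring
  have hab : ‖a‖ * ‖b‖ ≠ 0 := mul_ne_zero (norm_ne_zero_iff.2 ha) (norm_ne_zero_iff.2 hb)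
  simp only [sdelta, Pi.smul_apply, smul_eq_mul, num_eq, norm_mul,
    ← mul_max_of_nonneg _ _ (norm_nonneg a), ← mul_max_of_nonneg _ _ (norm_nonneg b)]
  rw [mul_mul_mul_comm, mul_div_mul_left _ _ hab]

theorem pdelta_mk_mk {v w : Fin 2 → ℚ_[p]} (hv : v ≠ 0) (hw : w ≠ 0) :
    pdelta p (Projectivization.mk ℚ_[p] v hv) (Projectivization.mk ℚ_[p] w hw) =
      sdelta p v w := by
  obtain ⟨a, ha⟩ := Projectivization.exists_smul_eq_mk_rep ℚ_[p] v hv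
  obtain ⟨b, hb⟩ := Projectivization.exists_smul_eq_mk_rep ℚ_[p] w hw
  rw [pdelta, ← ha, ← hb]
  exact sdelta_smul_smul v w a.ne_zero b.ne_zero

theorem pdelta_self (ξ : P1 p) : pdelta p ξ ξ = 0 := by
  simp [pdelta, sdelta, mul_comm]

theorem pdelta_comm (ξ η : P1 p) : pdelta p ξ η = pdelta p η ξ := by
  rw [pdelta, pdelta, sdelta, sdelta, norm_sub_rev, mul_comm (max _ _)]
  simp only [mul_comm]

theorem pdelta_nonneg (ξ η : P1 p) : 0 ≤ pdelta p ξ η :=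
  div_nonneg (norm_nonneg _) (by positivity)

theorem pdelta_le_one (ξ η : P1 p) : pdelta p ξ η ≤ 1 := by
  refine div_le_one_of_le₀ ?_ (by positivity)
  rw [sub_eq_add_neg]
  refine (IsUltrametricDist.norm_add_le_max _ _).trans (max_le ?_ ?_)
  · rw [norm_mul]
    gcongr
    exacts [le_max_left _ _, le_max_right _ _]
  · rw [norm_neg, norm_mul]
    gcongr
    exacts [le_max_right _ _, le_max_left _ _]

theorem measurable_pdelta : Measurable fun q : P1 p × P1 p ↦ pdelta p q.1 q.2 := by
  let σ : P1 p → Fin 2 → ℚ_[p] :=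
    Function.extend (iota p) (fun x ↦ ![x, 1]) fun _ ↦ ![1, 0]
  have measurable_σ : Measurable σ :=
    isOpenEmbedding_iota.measurableEmbedding.measurable_extend
      (by fun_prop : Continuous fun x : ℚ_[p] ↦ ![x, 1]).measurable measurable_const
  have exists_mk_σ (ξ : P1 p) : ∃ h, Projectivization.mk ℚ_[p] (σ ξ) h = ξ := by
    by_cases hξ : ξ ∈ Set.range (iota p)
    · obtain ⟨x, rfl⟩ := hξ
      have σ_iota : σ (iota p x) = ![x, 1] := isOpenEmbedding_iota.injective.extend_apply _ _ x
      simp only [σ_iota]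
      exact ⟨cons_one_ne_zero x, rfl⟩
    · have σ_eq : σ ξ = ![1, 0] := Function.extend_apply' _ _ _ hξ
      simp only [σ_eq]
      exact ⟨one_cons_ne_zero 0, (eq_mk_of_notMem_range_iota hξ).symm⟩
  have pdelta_eq (ξ η : P1 p) : pdelta p ξ η = sdelta p (σ ξ) (σ η) := by
    obtain ⟨hξ, h⟩ := exists_mk_σ ξ
    obtain ⟨hη, h'⟩ := exists_mk_σ η
    rw [← pdelta_mk_mk hξ hη, h, h']
  simp only [pdelta_eq, sdelta]
  fun_prop

end SphericalMetric

section Charts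

open Matrix

/-- Elements of `GL₂(ℤ_p)` moving the residue disc `{[x : 1] : |x| < 1}` of `0` to the residue
discs of the `p + 1` points of `ℙ¹(𝔽_p)`: the index `0` stands for the point at infinity, and
`k + 1` for the residue class of `k`. -/
noncomputable def chartElement : Fin (p + 1) → GL (Fin 2) ℤ_[p] :=
  Fin.cons (GeneralLinearGroup.swap ℤ_[p] 0 1)
    fun k ↦ GeneralLinearGroup.upperRightHom ((k : ℕ) : ℤ_[p])

/-- The affine chart of `ℙ¹(ℚ_p)` centred at the `k`-th point of `ℙ¹(𝔽_p)`. -/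
noncomputable def chart (k : Fin (p + 1)) (x : ℚ_[p]) : P1 p :=
  chartElement k • iota p x

theorem chart_zero (x : ℚ_[p]) :
    chart 0 x = Projectivization.mk ℚ_[p] ![1, x] (one_cons_ne_zero x) := by
  rw [chart, iota, smul_P1_mk]
  congr 1
  ext i
  fin_cases i <;> simp [chartElement, Matrix.swap, mulVec, dotProduct]

theorem upperRightHom_smul_iota (a : ℤ_[p]) (x : ℚ_[p]) :
    GeneralLinearGroup.upperRightHom a • iota p x = iota p (a + x) := by
  rw [iota, iota, smul_P1_mk]
  congr 1
  ext i
  fin_cases i <;> simp [mulVec, dotProduct, add_comm]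

theorem chart_succ (k : Fin p) (x : ℚ_[p]) : chart k.succ x = iota p ((k : ℕ) + x) :=
  upperRightHom_smul_iota (k : ℤ_[p]) x

theorem measurableEmbedding_chart (k : Fin (p + 1)) : MeasurableEmbedding (chart k) :=
  ((Homeomorph.smul (chartElement k)).measurableEmbedding).comp
    isOpenEmbedding_iota.measurableEmbedding

theorem pdelta_chart_zero_zero {x y : ℚ_[p]} (hx : ‖x‖ < 1) (hy : ‖y‖ < 1) :
    pdelta p (chart 0 x) (chart 0 y) = ‖x - y‖ := by
  rw [chart_zero, chart_zero, pdelta_mk_mk]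
  simp [sdelta, max_eq_left hx.le, max_eq_left hy.le, norm_sub_rev]

theorem pdelta_iota_iota {x y : ℚ_[p]} (hx : ‖x‖ ≤ 1) (hy : ‖y‖ ≤ 1) :
    pdelta p (iota p x) (iota p y) = ‖x - y‖ := by
  rw [iota, iota, pdelta_mk_mk]
  simp [sdelta, max_eq_right hx, max_eq_right hy]

theorem pdelta_chart_zero_iota {x y : ℚ_[p]} (hx : ‖x‖ < 1) (hy : ‖y‖ ≤ 1) :
    pdelta p (chart 0 x) (iota p y) = 1 := by
  have hxy : ‖-(x * y)‖ < 1 := by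
    rw [norm_neg, norm_mul]
    exact mul_lt_one_of_nonneg_of_lt_one_left (norm_nonneg x) hx hy
  rw [chart_zero, iota, pdelta_mk_mk]
  simp [sdelta, max_eq_left hx.le, max_eq_right hy, sub_eq_add_neg,
    norm_add_eq_one norm_one hxy]

theorem pdelta_chart_chart_self (k : Fin (p + 1)) {x y : ℚ_[p]} (hx : x ∈ Pball p)
    (hy : y ∈ Pball p) : pdelta p (chart k x) (chart k y) = ‖x - y‖ := by
  cases k using Fin.cases with
  | zero => exact pdelta_chart_zero_zero hx hy
  | succ k =>
    rw [chart_succ, chart_succ, pdelta_iota_iota (norm_natCast_add_le_one k hx)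
      (norm_natCast_add_le_one k hy), add_sub_add_left_eq_sub]

theorem pdelta_chart_chart_of_ne {k l : Fin (p + 1)} (hkl : k ≠ l) {x y : ℚ_[p]}
    (hx : x ∈ Pball p) (hy : y ∈ Pball p) : pdelta p (chart k x) (chart l y) = 1 := by
  cases k using Fin.cases with
  | zero =>
    cases l using Fin.cases with
    | zero => exact absurd rfl hkl
    | succ l =>
      rw [chart_succ]
      exact pdelta_chart_zero_iota hx (norm_natCast_add_le_one l hy)
  | succ k =>
    cases l using Fin.cases with
    | zero =>
      rw [chart_succ, pdelta_comm]
      exact pdelta_chart_zero_iota hy (norm_natCast_add_le_one k hx)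
    | succ l =>
      rw [chart_succ, chart_succ, pdelta_iota_iota (norm_natCast_add_le_one k hx)
        (norm_natCast_add_le_one l hy), add_sub_add_comm]
      exact norm_add_eq_one (norm_natCast_sub_natCast_eq_one fun h ↦ hkl (congrArg Fin.succ h))
        (norm_sub_lt_one hx hy)

theorem pairwise_disjoint_image_chart_Pball :
    Pairwise (Function.onFun Disjoint fun k : Fin (p + 1) ↦ chart k '' Pball p) := by
  intro k l hkl
  refine Set.disjoint_left.2 ?_
  rintro _ ⟨x, hx, rfl⟩ ⟨y, hy, hxy⟩
  have := pdelta_chart_chart_of_ne hkl hx hy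
  rw [hxy, pdelta_self] at this
  exact zero_ne_one this

theorem iUnion_image_chart_Pball : ⋃ k : Fin (p + 1), chart k '' Pball p = Set.univ := by
  refine Set.eq_univ_of_forall fun ξ ↦ Set.mem_iUnion.2 ?_
  induction ξ using Projectivization.ind with | h v hv =>
  rcases lt_or_ge ‖v 1‖ ‖v 0‖ with hlt | hle
  · have h0 : 0 < ‖v 0‖ := (norm_nonneg _).trans_lt hlt
    refine ⟨0, v 1 / v 0, by simpa [Pball, div_lt_one h0] using hlt, ?_⟩
    rw [chart_zero, Projectivization.mk_eq_mk_iff']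
    refine ⟨(v 0)⁻¹, ?_⟩
    ext i
    fin_cases i <;> simp [norm_pos_iff.1 h0, div_eq_inv_mul]
  · have h1 : v 1 ≠ 0 := by
      intro h1
      rw [h1, norm_zero, norm_le_zero_iff] at hle
      exact hv (by ext i; fin_cases i <;> assumption)
    have div_le_one : ‖v 0 / v 1‖ ≤ 1 := by
      rw [norm_div]
      exact div_le_one_of_le₀ hle (norm_nonneg _)
    obtain ⟨k, hk, -⟩ := existsUnique_fin_norm_sub_lt_one div_le_one
    refine ⟨k.succ, v 0 / v 1 - (k : ℕ), hk, ?_⟩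
    rw [chart_succ, add_sub_cancel, mk_eq_iota hv h1]

end Charts

section Measures

open Matrix
open scoped Pointwise

variable (ν : Measure (P1 p)) [SMulInvariantMeasure (GL (Fin 2) ℤ_[p]) (P1 p) ν]

theorem comap_chart_eq_comap_iota (k : Fin (p + 1)) :
    ν.comap (chart k) = ν.comap (iota p) := by
  ext t
  have image_eq : chart k '' t = chartElement k • iota p '' t :=
    Set.image_comp (chartElement k • ·) (iota p) t
  rw [(measurableEmbedding_chart k).comap_apply,
    isOpenEmbedding_iota.measurableEmbedding.comap_apply, image_eq, measure_smul]

theorem vaddInvariantMeasure_comap_iota :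
    VAddInvariantMeasure (maximalIdealAddSubgroup p) ℚ_[p] (ν.comap (iota p)) := by
  refine ⟨fun ⟨a, ha⟩ t _ ↦ ?_⟩
  let a' : ℤ_[p] := ⟨a, (mem_ball_zero_iff.1 ha).le⟩
  have smul_image : GeneralLinearGroup.upperRightHom a' • iota p '' ((a + ·) ⁻¹' t) =
      iota p '' t := by
    rw [← Set.image_smul, Set.image_image]
    simp only [upperRightHom_smul_iota]
    rw [← Set.image_image (iota p) (a + ·), Set.image_preimage_eq _ (add_left_surjective a)]
  rw [isOpenEmbedding_iota.measurableEmbedding.comap_apply,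
    isOpenEmbedding_iota.measurableEmbedding.comap_apply, ← smul_image, measure_smul]
  rfl

theorem comap_iota_Pball [IsProbabilityMeasure ν] :
    ν.comap (iota p) (Pball p) = ((p : ENNReal) + 1)⁻¹ := by
  have sum_eq_one : ∑ k : Fin (p + 1), ν (chart k '' Pball p) = 1 := by
    rw [← measure_univ (μ := ν), ← iUnion_image_chart_Pball,
      measure_iUnion pairwise_disjoint_image_chart_Pball fun k ↦
        (measurableEmbedding_chart k).measurableSet_image.2 (measurableSet_Pball p),
      tsum_fintype]
  simp only [← (measurableEmbedding_chart _).comap_apply, comap_chart_eq_comap_iota,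
    Finset.sum_const, Finset.card_univ, Fintype.card_fin, nsmul_eq_mul] at sum_eq_one
  refine ENNReal.eq_inv_of_mul_eq_one_left ?_
  rw [mul_comm]
  exact_mod_cast sum_eq_one

variable {μ : Measure ℚ_[p]} [μ.IsAddLeftInvariant]

theorem measure_Pball (hμ : μ (Zball p) = 1) : μ (Pball p) = (p : ENNReal)⁻¹ :=
  ENNReal.eq_inv_of_mul_eq_one_left <| by
    rw [mul_comm, ← measure_Zball_eq_mul_measure_Pball, hμ]

theorem restrict_comap_iota_Pball [IsProbabilityMeasure ν] (hμ : μ (Zball p) = 1) :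
    (ν.comap (iota p)).restrict (Pball p) =
      ((p : NNReal) / (p + 1)) • μ.restrict (Pball p) := by
  have := vaddInvariantMeasure_comap_iota ν
  have ratio_eq : ν.comap (iota p) (Pball p) / μ (Pball p) =
      ((p / (p + 1) : NNReal) : ENNReal) := by
    rw [comap_iota_Pball, measure_Pball hμ, ENNReal.coe_div (by positivity), div_eq_mul_inv,
      inv_inv, ENNReal.div_eq_inv_mul]
    push_cast
    rfl
  have hm := measurableSet_Pball p
  simp only [← coe_maximalIdealAddSubgroup] at hm ratio_eq ⊢
  have := restrict_addSubgroup_eq_div_smul hm (ν.comap (iota p)) μ ?_ ?_ ?_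
  · rw [this, ratio_eq]
    rfl
  all_goals
    simp [coe_maximalIdealAddSubgroup, comap_iota_Pball, measure_Pball hμ, NeZero.ne p]

theorem restrict_image_chart_Pball [IsProbabilityMeasure ν] (hμ : μ (Zball p) = 1)
    (k : Fin (p + 1)) :
    ν.restrict (chart k '' Pball p) =
      (((p : NNReal) / (p + 1)) • μ.restrict (Pball p)).map (chart k) := by
  have hk := measurableEmbedding_chart k
  rw [← restrict_comap_iota_Pball ν hμ, ← comap_chart_eq_comap_iota ν k, hk.restrict_comap,
    hk.map_comap, Measure.restrict_restrict hk.measurableSet_range,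
    Set.inter_eq_right.2 (Set.image_subset_range _ _)]

end Measures

section LogCoulombGas

theorem integrable_pdelta_cpow (ν : Measure (P1 p)) [IsFiniteMeasure ν] {β : ℂ}
    (hβ : 0 ≤ β.re) (N : ℕ) :
    Integrable (fun x : Fin N → P1 p ↦ ∏ q ∈ pairs N, ((pdelta p (x q.1) (x q.2) : ℝ) : ℂ) ^ β)
      (Measure.pi fun _ ↦ ν) := by
  refine integrable_pairProd (g := fun ξ η ↦ (pdelta p ξ η : ℂ) ^ β) ?_ fun ξ η ↦ ?_
  · exact (Complex.measurable_ofReal.comp measurable_pdelta).pow_const β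
  · have norm_le : ‖(pdelta p ξ η : ℂ) ^ β‖ ≤ pdelta p ξ η ^ β.re := by
      simpa [Complex.arg_ofReal_of_nonneg (pdelta_nonneg ξ η), abs_of_nonneg (pdelta_nonneg ξ η)]
        using Complex.norm_cpow_le (pdelta p ξ η : ℂ) β
    exact norm_le.trans (Real.rpow_le_one (pdelta_nonneg ξ η) (pdelta_le_one ξ η) hβ)

theorem partitionFunction_restrict_image_chart_Pball {μ : Measure ℚ_[p]} [SigmaFinite μ]
    [μ.IsAddLeftInvariant] (hμ : μ (Zball p) = 1) (ν : Measure (P1 p)) [IsProbabilityMeasure ν]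
    [SMulInvariantMeasure (GL (Fin 2) ℤ_[p]) (P1 p) ν] (β : ℂ) (k : Fin (p + 1)) (n : ℕ) :
    partitionFunction (Fin n) (ν.restrict (chart k '' Pball p))
        (fun ξ η ↦ (pdelta p ξ η : ℂ) ^ β) =
      ((p : ℂ) / (p + 1)) ^ n * ZN p μ (Pball p) n β := by
  rw [restrict_image_chart_Pball ν hμ k, partitionFunction_map (measurableEmbedding_chart k),
    partitionFunction_smul_measure, Fintype.card_fin,
    partitionFunction_restrict_congr (measurableSet_Pball p) fun x hx y hy ↦ by
      rw [pdelta_chart_chart_self k hx hy], Complex.real_smul]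
  push_cast
  rfl

end LogCoulombGas

theorem statement_13_general (p : ℕ) [Fact p.Prime]
    (μ : Measure ℚ_[p]) [SigmaFinite μ] [μ.IsAddLeftInvariant] (hμ : μ (Zball p) = 1)
    (ν : Measure (P1 p)) [IsProbabilityMeasure ν] (hν : IsGLInvariant p ν)
    (β : ℂ) (N : ℕ)
    (hint : Integrable
      (fun x : Fin N → P1 p ↦ ∏ q ∈ pairs N, ((pdelta p (x q.1) (x q.2) : ℝ) : ℂ) ^ β)
      (Measure.pi fun _ ↦ ν)) :
    ZP1 p ν N β / (N.factorial : ℂ) =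
      ∑ n ∈ Finset.Nat.antidiagonalTuple (p + 1) N,
        ∏ k : Fin (p + 1),
          ((p : ℂ) / ((p : ℂ) + 1)) ^ (n k) * ZN p μ (Pball p) (n k) β /
            ((n k).factorial : ℂ) := by
  have := hν.smulInvariantMeasure
  have ν_eq : ν = ν.restrict (⋃ k, chart k '' Pball p) := by
    rw [iUnion_image_chart_Pball, Measure.restrict_univ]
  have decomposition := partitionFunction_restrict_iUnion_div_factorial (ι := Fin N) (μ := ν)
    (g := fun ξ η ↦ (pdelta p ξ η : ℂ) ^ β)
    (fun k ↦ (measurableEmbedding_chart k).measurableSet_image.2 (measurableSet_Pball p))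
    pairwise_disjoint_image_chart_Pball
    (by
      rintro k l hkl _ ⟨x, hx, rfl⟩ _ ⟨y, hy, rfl⟩
      rw [pdelta_chart_chart_of_ne hkl hx hy, Complex.ofReal_one, Complex.one_cpow])
    (ν_eq ▸ hint)
  simp only [← ν_eq, Fintype.card_fin, partitionFunction_restrict_image_chart_Pball hμ,
    Finset.piAntidiag_univ_fin_eq_antidiagonalTuple] at decomposition
  exact decomposition

theorem statement_13 (p : ℕ) [Fact p.Prime]
    (μ : Measure ℚ_[p]) [SigmaFinite μ] [μ.IsAddHaarMeasure] (hμ : μ (Zball p) = 1)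
    (ν : Measure (P1 p)) [IsProbabilityMeasure ν] (hν : IsGLInvariant p ν)
    (β : ℝ) (hβ : 0 < β) (N : ℕ) :
    ZP1 p ν N (β : ℂ) / (N.factorial : ℂ) =
      ∑ n ∈ Finset.Nat.antidiagonalTuple (p + 1) N,
        ∏ k : Fin (p + 1),
          ((p : ℂ) / ((p : ℂ) + 1)) ^ (n k) * ZN p μ (Pball p) (n k) (β : ℂ) /
            ((n k).factorial : ℂ) :=
  statement_13_general p μ hμ ν hν β N (integrable_pdelta_cpow ν hβ.le N)

end LogCoulomb
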